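/- arXiv:1607.06070 — 4 statements merged into one kernel-verified Lean document; each statement's English description precedes it below -/
import Mathlib

section
/- For every real number α ≠ 1, every integer k ≥ 1, and all strictly positive real numbers r_0, …, r_k with r_{k−1} ≠ r_k, the recursive formula I_{α,k}(r_0,…,r_k) = (1/(α−1)) · (r_{k−1} − r_k)^{−1} · [ I_{α−1,k−1}(r_0,…,r_{k−2},r_k) − I_{α−1,k−1}(r_0,…,r_{k−2},r_{k−1}) ] holds. -/
/-!
Split off the last coordinate of the simplex: `Δ_{k+1}` is the set of `(p, t)` with `p ∈ Δ_k` and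
`0 ≤ t ≤ p_k` (where `p_k` means `1` if `k = 0`). With `A(p)` the linear form of
`(r_0, …, r_k)` at `p` and `D = r_{k+1} - r_k ≠ 0`, the integrand at `(p, t)` is
`(A(p) + t D)^(-α)`, so the inner integral is `((A(p) + p_k D)^(1-α) - A(p)^(1-α)) / ((1-α) D)`. Since `A(p) + p_k D` is the
linear form of `(r_0, …, r_{k-1}, r_{k+1})`, integrating over `p` gives the claim.

The integrals exist because the linear form is positive on the compact simplex
(`simplexForm_pos`); Fubini is carried out in `setIntegral_simplexSet_succ`, and the case `k = 0`
needs no separate treatment since `I_{α,0}` is also an integral over a one-point simplex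
(`heatI_eq_integral`).
-/

open MeasureTheory Finset

/-- The `k`-simplex `Δ_k = {s : 0 ≤ s_k ≤ ⋯ ≤ s_1 ≤ 1}` (indices shifted to `0,…,k-1`). -/
def simplexSet (k : ℕ) : Set (Fin k → ℝ) :=
  {s | (∀ i, 0 ≤ s i) ∧ (∀ i, s i ≤ 1) ∧ ∀ i j : Fin k, i ≤ j → s j ≤ s i}

/-- `I_{α,k}(r_0,…,r_k)`: for `k ≥ 1` the integral over the simplex `Δ_k` of
`[(1-s_1)r_0 + (s_1-s_2)r_1 + ⋯ + s_k r_k]^{-α} = [r_0 + Σ_i s_i (r_i - r_{i-1})]^{-α}`,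
and `I_{α,0}(r_0) = r_0^{-α}`. -/
noncomputable def heatI (α : ℝ) : (k : ℕ) → (Fin (k + 1) → ℝ) → ℝ
  | 0, r => r 0 ^ (-α)
  | (k + 1), r =>
      ∫ s in simplexSet (k + 1),
        (r 0 + ∑ i : Fin (k + 1), s i * (r i.succ - r i.castSucc)) ^ (-α)

/-- The linear form `r_0 + Σ_i s_i (r_i - r_{i-1})` whose power is integrated in `heatI`. -/
def simplexForm {k : ℕ} (r : Fin (k + 1) → ℝ) (s : Fin k → ℝ) : ℝ :=
  r 0 + ∑ i : Fin k, s i * (r i.succ - r i.castSucc)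

/-- The last coordinate of a point of `Δ_k`, with the convention that it is `1` for `k = 0`:
the upper bound for a coordinate appended to the point. -/
def lastCoord {k : ℕ} (p : Fin k → ℝ) : ℝ := (Fin.cons 1 p : Fin (k + 1) → ℝ) (Fin.last k)

theorem heatI_eq_integral (α : ℝ) (k : ℕ) (r : Fin (k + 1) → ℝ) :
    heatI α k r = ∫ s in simplexSet k, simplexForm r s ^ (-α) := by
  cases k with
  | succ k => rfl
  | zero =>
    have h : simplexSet 0 = Set.univ := by
      ext s
      simp [simplexSet]
    rw [h, Measure.restrict_univ, volume_pi, Measure.pi_of_empty _ (fun i => i.elim0)]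
    simp [heatI, simplexForm]

theorem snoc_mem_simplexSet {k : ℕ} (p : Fin k → ℝ) (t : ℝ) :
    (Fin.snoc p t : Fin (k + 1) → ℝ) ∈ simplexSet (k + 1) ↔
      p ∈ simplexSet k ∧ t ∈ Set.Icc 0 (lastCoord p) := by
  cases k with
  | zero =>
    simp [simplexSet, lastCoord, Fin.forall_fin_one, Fin.snoc]
  | succ k =>
    have hl : lastCoord p = p (Fin.last k) := by
      simp [lastCoord, ← Fin.succ_last]
    rw [hl]
    constructor
    · rintro ⟨h0, h1, h2⟩
      refine ⟨⟨fun i => ?_, fun i => ?_, fun i j hij => ?_⟩, ?_, ?_⟩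
      · simpa using h0 i.castSucc
      · simpa using h1 i.castSucc
      · simpa using h2 i.castSucc j.castSucc (by simpa using hij)
      · simpa using h0 (Fin.last _)
      · simpa using h2 (Fin.last k).castSucc (Fin.last _) (Fin.le_last _)
    · rintro ⟨⟨h0, h1, h2⟩, ht0, ht⟩
      refine ⟨fun i => ?_, fun i => ?_, fun i j hij => ?_⟩
      · refine Fin.lastCases ?_ (fun i => ?_) i
        · simpa using ht0
        · simpa using h0 i
      · refine Fin.lastCases ?_ (fun i => ?_) i
        · simpa using ht.trans (h1 _)
        · simpa using h1 i
      · induction j using Fin.lastCases with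
        | last =>
          induction i using Fin.lastCases with
          | last => exact le_rfl
          | cast i => simpa using ht.trans (h2 i _ (Fin.le_last i))
        | cast j =>
          induction i using Fin.lastCases with
          | last => exact absurd (lt_of_le_of_lt hij (Fin.castSucc_lt_last j)) (lt_irrefl _)
          | cast i => simpa using h2 i j (by simpa using hij)

theorem simplexForm_snoc {k : ℕ} (r : Fin (k + 2) → ℝ) (p : Fin k → ℝ) (t : ℝ) :
    simplexForm r (Fin.snoc p t : Fin (k + 1) → ℝ) =
      simplexForm (fun i : Fin (k + 1) => r i.castSucc) p
        + (r (Fin.last (k + 1)) - r (Fin.last k).castSucc) * t := by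
  simp only [simplexForm, Fin.sum_univ_castSucc, Fin.snoc_castSucc, Fin.snoc_last, Fin.succ_last,
    Fin.castSucc_zero, Fin.succ_castSucc]
  ring

/-- Replacing `r_k` by `r_{k+1}` in the form of `(r_0, …, r_k)` adds `p_k (r_{k+1} - r_k)`. -/
theorem simplexForm_replace {k : ℕ} (r : Fin (k + 2) → ℝ) (p : Fin k → ℝ) :
    simplexForm (Fin.snoc (fun i : Fin k => r i.castSucc.castSucc) (r (Fin.last (k + 1)))) p =
      simplexForm (fun i : Fin (k + 1) => r i.castSucc) p
        + (r (Fin.last (k + 1)) - r (Fin.last k).castSucc) * lastCoord p := by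
  cases k with
  | zero => simp [simplexForm, lastCoord, Fin.snoc]
  | succ k =>
    have hl : lastCoord p = p (Fin.last k) := by
      simp [lastCoord, ← Fin.succ_last]
    have h0 : (Fin.snoc (fun i : Fin (k + 1) => r i.castSucc.castSucc) (r (Fin.last (k + 2))) :
        Fin (k + 2) → ℝ) 0 = r 0 := by
      rw [← Fin.castSucc_zero, Fin.snoc_castSucc]
      simp
    simp only [simplexForm, hl, h0, Fin.sum_univ_castSucc, Fin.snoc_castSucc, Fin.snoc_last,
      Fin.succ_last, Fin.castSucc_zero, Fin.succ_castSucc]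
    ring

theorem snoc_pos {k : ℕ} {r : Fin (k + 2) → ℝ} (hr : ∀ i, 0 < r i) (i : Fin (k + 1)) :
    0 < (Fin.snoc (fun i : Fin k => r i.castSucc.castSucc) (r (Fin.last (k + 1))) :
      Fin (k + 1) → ℝ) i := by
  refine Fin.lastCases ?_ (fun i => ?_) i
  · simpa using hr _
  · simpa using hr _

/-- The form is a convex combination of the `r_i`. The induction appends one coordinate
`t ∈ [0, p_k]`: the form is affine in `t`, and at both ends of this interval it is the form of a
positive tuple on the smaller simplex. -/
theorem simplexForm_pos {k : ℕ} {r : Fin (k + 1) → ℝ} (hr : ∀ i, 0 < r i) {s : Fin k → ℝ}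
    (hs : s ∈ simplexSet k) : 0 < simplexForm r s := by
  induction k with
  | zero => simpa [simplexForm] using hr 0
  | succ k ih =>
    obtain ⟨p, t, rfl⟩ : ∃ p t, s = (Fin.snoc p t : Fin (k + 1) → ℝ) :=
      ⟨Fin.init s, s (Fin.last k), (Fin.snoc_init_self s).symm⟩
    obtain ⟨hp, ht0, ht1⟩ := (snoc_mem_simplexSet p t).1 hs
    have hA := ih (r := fun i : Fin (k + 1) => r i.castSucc) (fun i => hr _) hp
    have hB := ih (snoc_pos hr) hp
    rw [simplexForm_replace] at hB
    rw [simplexForm_snoc]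
    rcases le_total 0 (r (Fin.last (k + 1)) - r (Fin.last k).castSucc) with hD | hD
    · have := mul_nonneg hD ht0
      linarith
    · have := mul_le_mul_of_nonpos_left ht1 hD
      linarith

theorem isCompact_simplexSet (k : ℕ) : IsCompact (simplexSet k) := by
  refine (isCompact_Icc (a := (0 : Fin k → ℝ)) (b := 1)).of_isClosed_subset ?_ ?_
  · simp only [simplexSet, Set.ofPred_and, Set.ofPred_forall]
    refine IsClosed.inter ?_ (IsClosed.inter ?_ ?_)
    · exact isClosed_iInter fun i => isClosed_le (by fun_prop) (by fun_prop)
    · exact isClosed_iInter fun i => isClosed_le (by fun_prop) (by fun_prop)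
    · exact isClosed_iInter fun i => isClosed_iInter fun j => isClosed_iInter fun _ =>
        isClosed_le (by fun_prop) (by fun_prop)
  · exact fun s hs => ⟨fun i => hs.1 i, fun i => hs.2.1 i⟩

theorem integrableOn_simplexForm_rpow (β : ℝ) {k : ℕ} {r : Fin (k + 1) → ℝ} (hr : ∀ i, 0 < r i) :
    IntegrableOn (fun s => simplexForm r s ^ β) (simplexSet k) := by
  refine ContinuousOn.integrableOn_compact (isCompact_simplexSet k) ?_
  refine ContinuousOn.rpow_const ?_ fun s hs => Or.inl (simplexForm_pos hr hs).ne'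
  unfold simplexForm
  fun_prop

theorem lastCoord_nonneg {k : ℕ} {p : Fin k → ℝ} (hp : p ∈ simplexSet k) : 0 ≤ lastCoord p := by
  cases k with
  | zero => simp [lastCoord]
  | succ k => simpa [lastCoord, ← Fin.succ_last] using hp.1 (Fin.last k)

/-- Fubini on the simplex: the last coordinate is integrated first. -/
theorem setIntegral_simplexSet_succ {k : ℕ} {f : (Fin (k + 1) → ℝ) → ℝ}
    (hf : IntegrableOn f (simplexSet (k + 1))) :
    ∫ s in simplexSet (k + 1), f s =
      ∫ p in simplexSet k, ∫ t in (0 : ℝ)..lastCoord p, f (Fin.snoc p t) := by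
  have hm : ∀ n, MeasurableSet (simplexSet n) := fun n => (isCompact_simplexSet n).measurableSet
  have he := (volume_preserving_piFinSuccAbove (fun _ : Fin (k + 1) => ℝ) (Fin.last k)).symm
  have hsymm : ∀ z : ℝ × (Fin k → ℝ),
      (MeasurableEquiv.piFinSuccAbove (fun _ : Fin (k + 1) => ℝ) (Fin.last k)).symm z =
        Fin.snoc z.2 z.1 := fun z => by
    simp [MeasurableEquiv.piFinSuccAbove, Fin.insertNthEquiv, Fin.insertNth_last']
  have hint := (he.integrable_comp_emb (MeasurableEquiv.measurableEmbedding _)).2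
    ((integrable_indicator_iff (hm _)).2 hf)
  rw [← integral_indicator (hm _), ← he.integral_comp (MeasurableEquiv.measurableEmbedding _),
    Measure.volume_eq_prod, ← integral_indicator (hm _)]
  refine (integral_prod_symm _ hint).trans ?_
  refine integral_congr_ae (Filter.Eventually.of_forall fun p => ?_)
  simp only [Function.comp_apply, hsymm]
  by_cases hp : p ∈ simplexSet k
  · rw [Set.indicator_of_mem hp, intervalIntegral.integral_of_le (lastCoord_nonneg hp),
      ← integral_Icc_eq_integral_Ioc, ← integral_indicator measurableSet_Icc]
    refine integral_congr_ae (Filter.Eventually.of_forall fun t => ?_)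
    beta_reduce
    by_cases ht : t ∈ Set.Icc 0 (lastCoord p)
    · rw [Set.indicator_of_mem ((snoc_mem_simplexSet p t).2 ⟨hp, ht⟩), Set.indicator_of_mem ht]
    · rw [Set.indicator_of_notMem fun h => ht ((snoc_mem_simplexSet p t).1 h).2,
        Set.indicator_of_notMem ht]
  · have h0 : ∀ t : ℝ, (simplexSet (k + 1)).indicator f (Fin.snoc p t) = 0 := fun t =>
      Set.indicator_of_notMem (fun h => hp ((snoc_mem_simplexSet p t).1 h).1) f
    simp [h0, Set.indicator_of_notMem hp]

theorem integral_affine_rpow {α A D l : ℝ} (hα : α ≠ 1) (hD : D ≠ 0) (hA : 0 < A)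
    (hl : 0 < A + D * l) :
    ∫ t in (0 : ℝ)..l, (A + D * t) ^ (-α) =
      (1 / (α - 1)) * (-D)⁻¹ * ((A + D * l) ^ (-(α - 1)) - A ^ (-(α - 1))) := by
  have h1 : α - 1 ≠ 0 := sub_ne_zero.2 hα
  have h2 : 1 - α ≠ 0 := sub_ne_zero.2 hα.symm
  rw [intervalIntegral.integral_comp_add_mul (fun x => x ^ (-α)) hD, mul_zero, add_zero,
    integral_rpow (Or.inr ⟨fun h => hα (by linarith), fun h => ?_⟩)]
  · rw [show -α + 1 = 1 - α by ring, show -(α - 1) = 1 - α by ring,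
      show α - 1 = -(1 - α) by ring, smul_eq_mul]
    field_simp
  · exact absurd h.1 (not_le.2 (lt_min hA hl))

/-- Recursive formula for `I_{α,k}`: for `α ≠ 1`, `k ≥ 1` (here the simplex dimension is
`k+1 ≥ 1`), strictly positive `r_0,…,r_{k+1}` with the last two distinct,
`I_{α,k+1}(r_0,…,r_{k+1}) = (1/(α-1)) (r_k - r_{k+1})⁻¹
  [I_{α-1,k}(r_0,…,r_{k-1},r_{k+1}) - I_{α-1,k}(r_0,…,r_k)]`. -/
theorem heatI_recursive (α : ℝ) (hα : α ≠ 1) (k : ℕ) (r : Fin (k + 2) → ℝ)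
    (hr : ∀ i, 0 < r i)
    (hne : r (Fin.castSucc (Fin.last k)) ≠ r (Fin.last (k + 1))) :
    heatI α (k + 1) r
      = (1 / (α - 1)) * (r (Fin.castSucc (Fin.last k)) - r (Fin.last (k + 1)))⁻¹ *
        (heatI (α - 1) k
            (Fin.snoc (fun i : Fin k => r (i.castSucc.castSucc)) (r (Fin.last (k + 1))))
          - heatI (α - 1) k (fun i : Fin (k + 1) => r i.castSucc)) := by
  have hD : r (Fin.last (k + 1)) - r (Fin.last k).castSucc ≠ 0 := sub_ne_zero.2 hne.symm
  have hr' : ∀ i : Fin (k + 1), 0 < r i.castSucc := fun i => hr _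
  rw [heatI_eq_integral, heatI_eq_integral, heatI_eq_integral,
    setIntegral_simplexSet_succ (integrableOn_simplexForm_rpow (-α) hr),
    ← integral_sub (integrableOn_simplexForm_rpow _ (snoc_pos hr))
      (integrableOn_simplexForm_rpow _ hr'),
    ← integral_const_mul]
  refine setIntegral_congr_fun (isCompact_simplexSet k).measurableSet fun p hp => ?_
  have hB := simplexForm_pos (snoc_pos hr) hp
  simp only [simplexForm_replace, simplexForm_snoc] at hB ⊢
  rw [integral_affine_rpow hα hD (simplexForm_pos hr' hp) hB, neg_sub]
end

section
/- For every natural number ℓ ≥ 0 and all strictly positive real numbers r_0, r_1, one has I_{ℓ+3/2, 1}(r_0, r_1) = (2/(2ℓ+1)) · (√r_0 · √r_1)^{−(2ℓ+1)} · (√r_0 + √r_1)^{−1} · Σ_{l=0}^{2ℓ} (√r_0)^{l} (√r_1)^{2ℓ−l}. -/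
/-! The simplex `Δ_1` is the interval `[0,1]`, so the integral is `∫₀¹ (r₀ + s (r₁ - r₀))^{-α} ds` with
`α = ℓ + 3/2`. Write `a = √r₀`, `b = √r₁`, `n = 2ℓ+1`. If `a = b` the integrand is the constant
`a^{-(n+2)}` and every term of the sum is `a^{2ℓ}`. If `a ≠ b`, integrating the power gives
`(2/n) (a^{-n} - b^{-n}) / (b² - a²)`, and `a^n - b^n = (a - b) ∑ a^l b^{n-1-l}` cancels the factor
`b - a` of `b² - a²`. -/

open MeasureTheory Finset

/-- For `k = 1` the simplex integral is an interval integral over `[0,1]`. -/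
theorem heatI_one_eq (α r₀ r₁ : ℝ) :
    heatI α 1 ![r₀, r₁] = ∫ s in (0 : ℝ)..1, ((r₁ - r₀) * s + r₀) ^ (-α) := by
  have hset : simplexSet 1 = MeasurableEquiv.funUnique (Fin 1) ℝ ⁻¹' Set.Icc 0 1 := by
    ext s
    simp [simplexSet, MeasurableEquiv.funUnique]
  have key := (volume_preserving_funUnique (Fin 1) ℝ).setIntegral_preimage_emb
    (MeasurableEquiv.measurableEmbedding _)
    (fun s : ℝ => ((r₁ - r₀) * s + r₀) ^ (-α)) (Set.Icc 0 1)
  rw [intervalIntegral.integral_of_le zero_le_one, ← integral_Icc_eq_integral_Ioc, ← key, ← hset]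
  simp only [heatI]
  congr 1
  funext s
  simp [MeasurableEquiv.funUnique]
  ring_nf

theorem sq_rpow_neg_half {a : ℝ} (ha : 0 < a) (m : ℕ) :
    (a ^ 2) ^ (-((m : ℝ) / 2)) = (a ^ m)⁻¹ := by
  rw [← Real.rpow_natCast a 2, ← Real.rpow_mul ha.le, ← Real.rpow_natCast a m,
    ← Real.rpow_neg ha.le]
  congr 1
  push_cast
  ring

/-- Case 3 (`d` odd, positive half-integer exponent): for `ℓ ∈ ℕ` and `r₀, r₁ > 0`,
`I_{ℓ+3/2,1}(r₀,r₁) = (2/(2ℓ+1)) (√r₀ √r₁)^{-(2ℓ+1)} (√r₀+√r₁)⁻¹ Σ_{l=0}^{2ℓ} √r₀^l √r₁^{2ℓ-l}`. -/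
theorem heatI_half_integer_pos (ℓ : ℕ) (r₀ r₁ : ℝ) (h₀ : 0 < r₀) (h₁ : 0 < r₁) :
    heatI ((ℓ : ℝ) + 3 / 2) 1 ![r₀, r₁]
      = (2 / (2 * (ℓ : ℝ) + 1)) * ((Real.sqrt r₀ * Real.sqrt r₁) ^ (2 * ℓ + 1))⁻¹ *
        (Real.sqrt r₀ + Real.sqrt r₁)⁻¹ *
        ∑ l ∈ Finset.range (2 * ℓ + 1), Real.sqrt r₀ ^ l * Real.sqrt r₁ ^ (2 * ℓ - l) := by
  rw [heatI_one_eq]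
  obtain ⟨a, ha, rfl⟩ : ∃ a : ℝ, 0 < a ∧ r₀ = a ^ 2 :=
    ⟨√r₀, Real.sqrt_pos.2 h₀, (Real.sq_sqrt h₀.le).symm⟩
  obtain ⟨b, hb, rfl⟩ : ∃ b : ℝ, 0 < b ∧ r₁ = b ^ 2 :=
    ⟨√r₁, Real.sqrt_pos.2 h₁, (Real.sq_sqrt h₁.le).symm⟩
  rw [Real.sqrt_sq ha.le, Real.sqrt_sq hb.le]
  have hl : (2 * (ℓ : ℝ) + 1) ≠ 0 := by positivity
  rcases eq_or_ne a b with rfl | hab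
  · have hsum : ∑ l ∈ range (2 * ℓ + 1), a ^ l * a ^ (2 * ℓ - l)
        = (2 * (ℓ : ℝ) + 1) * a ^ (2 * ℓ) := by
      rw [sum_congr rfl (g := fun _ => a ^ (2 * ℓ))]
      · simp
      · intro l hl
        rw [← pow_add, Nat.add_sub_cancel' (Nat.lt_succ_iff.1 (mem_range.1 hl))]
    have hexp : -((ℓ : ℝ) + 3 / 2) = -(((2 * ℓ + 3 : ℕ) : ℝ) / 2) := by
      push_cast
      ring
    rw [hsum]
    simp only [sub_self, zero_mul, zero_add]
    rw [hexp, sq_rpow_neg_half ha]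
    simp only [intervalIntegral.integral_const, sub_zero, one_smul]
    field_simp
    ring
  · have hne : b ^ 2 - a ^ 2 ≠ 0 := by
      intro h
      exact hab ((pow_left_inj₀ ha.le hb.le two_ne_zero).1 (sub_eq_zero.1 h).symm)
    have hba : a - b ≠ 0 := sub_ne_zero.2 hab
    have hexp : -((ℓ : ℝ) + 3 / 2) + 1 = -(((2 * ℓ + 1 : ℕ) : ℝ) / 2) := by
      push_cast
      ring
    have hgeom := (Commute.all a b).geom_sum₂_mul (2 * ℓ + 1)
    rw [Nat.add_sub_cancel] at hgeom
    rw [intervalIntegral.integral_comp_mul_add (fun x => x ^ (-((ℓ : ℝ) + 3 / 2))) hne,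
      integral_rpow, hexp]
    · simp only [mul_zero, zero_add, mul_one, sub_add_cancel]
      rw [sq_rpow_neg_half ha, sq_rpow_neg_half hb, eq_div_of_mul_eq hba hgeom]
      push_cast
      rw [show b ^ 2 - a ^ 2 = -((a - b) * (a + b)) by ring, smul_eq_mul]
      field_simp
      ring
    · refine Or.inr ⟨?_, ?_⟩
      · have : (0 : ℝ) ≤ ℓ := ℓ.cast_nonneg
        intro h
        linarith
      · simp only [mul_zero, zero_add, mul_one, sub_add_cancel]
        exact Set.notMem_uIcc_of_lt h₀ h₁
end

section
/- For every natural number ℓ ≥ 0 and all strictly positive real numbers r_0, r_1, one has I_{−ℓ+1/2, 1}(r_0, r_1) = (2/(2ℓ+1)) · (√r_0 + √r_1)^{−1} · Σ_{l=0}^{2ℓ} (√r_0)^{l} (√r_1)^{2ℓ−l}. -/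
/-!
With `a = √r₀` and `b = √r₁`, the integral of `(a² + (b² - a²) x) ^ (ℓ - 1/2)` over `[0,1]` is
`(b ^ (2ℓ+1) - a ^ (2ℓ+1)) / ((ℓ + 1/2) (b² - a²))` when `a ≠ b`. Factoring
`b² - a² = (b - a) (b + a)`, the quotient `(b ^ (2ℓ+1) - a ^ (2ℓ+1)) / (b - a)` is the geometric
sum of the claim. For `a = b` the integrand is the constant `a ^ (2ℓ-1)`.
-/

open MeasureTheory Finset

/-- For `k = 1` the simplex is `[0,1]`, up to the measure-preserving identification of
`Fin 1 → ℝ` with `ℝ`. -/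
lemma heatI_one (α r₀ r₁ : ℝ) :
    heatI α 1 ![r₀, r₁] = ∫ x in (0 : ℝ)..1, (r₀ + (r₁ - r₀) * x) ^ (-α) := by
  have hset : MeasurableEquiv.funUnique (Fin 1) ℝ ⁻¹' Set.Icc 0 1 = simplexSet 1 := by
    ext s
    simp [simplexSet, MeasurableEquiv.funUnique, Subsingleton.elim _ (0 : Fin 1)]
  rw [intervalIntegral.integral_of_le zero_le_one, ← integral_Icc_eq_integral_Ioc,
    ← (volume_preserving_funUnique (Fin 1) ℝ).setIntegral_preimage_emb
      (MeasurableEquiv.measurableEmbedding _), hset]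
  simp [heatI, MeasurableEquiv.funUnique, mul_comm]
  rfl

lemma sq_rpow_half_integer {a : ℝ} (ha : 0 < a) (ℓ : ℕ) :
    (a ^ 2) ^ ((ℓ : ℝ) + 1 / 2) = a ^ (2 * ℓ + 1) := by
  rw [← Real.rpow_natCast a 2, ← Real.rpow_mul ha.le, ← Real.rpow_natCast]
  congr 1
  push_cast
  ring

/-- Case 3 (`d` odd, negative half-integer exponent): for `ℓ ∈ ℕ` and `r₀, r₁ > 0`,
`I_{-ℓ+1/2,1}(r₀,r₁) = (2/(2ℓ+1)) (√r₀+√r₁)⁻¹ Σ_{l=0}^{2ℓ} √r₀^l √r₁^{2ℓ-l}`. -/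
theorem heatI_half_integer_neg (ℓ : ℕ) (r₀ r₁ : ℝ) (h₀ : 0 < r₀) (h₁ : 0 < r₁) :
    heatI (-(ℓ : ℝ) + 1 / 2) 1 ![r₀, r₁]
      = (2 / (2 * (ℓ : ℝ) + 1)) * (Real.sqrt r₀ + Real.sqrt r₁)⁻¹ *
        ∑ l ∈ Finset.range (2 * ℓ + 1), Real.sqrt r₀ ^ l * Real.sqrt r₁ ^ (2 * ℓ - l) := by
  obtain ⟨a, ha, rfl⟩ : ∃ a : ℝ, 0 < a ∧ r₀ = a ^ 2 :=
    ⟨√r₀, Real.sqrt_pos.2 h₀, (Real.sq_sqrt h₀.le).symm⟩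
  obtain ⟨b, hb, rfl⟩ : ∃ b : ℝ, 0 < b ∧ r₁ = b ^ 2 :=
    ⟨√r₁, Real.sqrt_pos.2 h₁, (Real.sq_sqrt h₁.le).symm⟩
  rw [heatI_one, Real.sqrt_sq ha.le, Real.sqrt_sq hb.le]
  have hl : (0 : ℝ) ≤ ℓ := Nat.cast_nonneg ℓ
  by_cases hab : a = b
  · subst hab
    have hsum : ∑ l ∈ Finset.range (2 * ℓ + 1), a ^ l * a ^ (2 * ℓ - l)
        = (2 * ℓ + 1) * a ^ (2 * ℓ) := by
      rw [Finset.sum_congr rfl (g := fun _ => a ^ (2 * ℓ))]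
      · simp
      · intro l hm
        rw [← pow_add]
        congr 1
        have := Finset.mem_range.1 hm
        omega
    have hpow : (a ^ 2) ^ (-(-(ℓ : ℝ) + 1 / 2)) = a ^ (2 * ℓ + 1) / a ^ 2 := by
      rw [← sq_rpow_half_integer ha, show -(-(ℓ : ℝ) + 1 / 2) = (ℓ + 1 / 2) - 1 by ring,
        Real.rpow_sub_one h₀.ne']
    rw [hsum]
    simp only [sub_self, zero_mul, add_zero, intervalIntegral.integral_const, hpow]
    simp only [sub_zero, one_smul]
    field_simp
    ring
  · have hd : b ^ 2 - a ^ 2 ≠ 0 := by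
      rw [sq_sub_sq]
      exact mul_ne_zero (by positivity) (sub_ne_zero.2 (Ne.symm hab))
    have hg := (Commute.all a b).geom_sum₂_mul (2 * ℓ + 1)
    simp only [Nat.add_sub_cancel] at hg
    have hab' : a - b ≠ 0 := sub_ne_zero.2 hab
    rw [eq_div_of_mul_eq hab' hg,
      intervalIntegral.integral_comp_add_mul (fun x => x ^ (-(-(ℓ : ℝ) + 1 / 2))) hd,
      integral_rpow (Or.inl (by linarith)),
      show -(-(ℓ : ℝ) + 1 / 2) + 1 = ℓ + 1 / 2 by ring, mul_zero, add_zero, mul_one,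
      add_sub_cancel, sq_rpow_half_integer ha, sq_rpow_half_integer hb, smul_eq_mul,
      show b ^ 2 - a ^ 2 = -((a + b) * (a - b)) by ring]
    have hs : a + b ≠ 0 := by positivity
    have h2 : (2 * (ℓ : ℝ) + 1) ≠ 0 := by positivity
    have h3 : ((ℓ : ℝ) + 1 / 2) = (2 * ℓ + 1) / 2 := by ring
    rw [h3]
    field_simp
    ring
end

section
/- Let A be a unital associative ℂ-algebra that is simple (its only two-sided ideals are 0 and A) and central over ℂ (its center equals ℂ·1). For every integer k ≥ 1, the ℂ-linear map ι from the (k+1)-fold tensor product A ⊗ A ⊗ ⋯ ⊗ A (over ℂ) to the space of k-multilinear maps from A^k to A, defined on elementary tensors by ι(a_0 ⊗ a_1 ⊗ ⋯ ⊗ a_k)(b_1,…,b_k) = a_0 b_1 a_1 b_2 a_2 ⋯ b_k a_k, is injective. -/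
/-!
The proof rests on a rigidity lemma for a central simple algebra `A`
(`eq_zero_of_forall_sum_mul_mul_eq_zero`): if the `e i` are linearly independent and
`∑ i, e i * b * a i = 0` for every `b : A`, then every `a i` vanishes. The values taken at a fixed
index `i₀` by the solutions `a` of this system form a two-sided ideal. If it is zero, the index
`i₀` can be dropped. If it is everything, some solution has `a i₀ = 1`; for each `d` the commutators
`a i * d - d * a i` solve the system again and vanish at `i₀`, so by induction on the number of
indices every `a i` is central, hence a scalar, and `b = 1` gives a nontrivial linear relation among
the `e i`.

Consequently, if the functions `v j` are linearly independent, then so are the functions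
`(b, x) ↦ e i * b * v j x`. Peeling off the first letter of the word `a₀ b₁ a₁ ⋯ b_k a_k`, induction
on `k` shows that the words with letters `a_m` in a basis of `A` are linearly independent as
functions of `b`. These are the images under `ι` of a basis of the tensor power, so `ι` is injective.
-/

/-- If `∑ i ∈ S, e i * b * a i = 0` for all `b` in a central simple algebra, with `e` linearly
independent, then the coefficients `a i` vanish on `S`. -/
theorem eq_zero_of_forall_sum_mul_mul_eq_zero {A I : Type*} [Ring A] [Algebra ℂ A]
    (hsimple : ∀ J : TwoSidedIdeal A, J = ⊥ ∨ J = ⊤)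
    (hcentral : Subalgebra.center ℂ A = ⊥)
    {e : I → A} (he : LinearIndependent ℂ e) (S : Finset I) :
    ∀ a : I → A, (∀ b, ∑ i ∈ S, e i * b * a i = 0) → ∀ i ∈ S, a i = 0 := by
  classical
  induction S using Finset.induction_on with
  | empty => simp
  | insert i₀ S hi₀ ih =>
    -- The ideal of values at `i₀` of the solutions.
    let J : TwoSidedIdeal A := TwoSidedIdeal.mk'
      {x | ∃ a : I → A, a i₀ = x ∧ ∀ b, ∑ i ∈ insert i₀ S, e i * b * a i = 0}
      ⟨0, rfl, by simp⟩
      (by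
        rintro _ _ ⟨a, rfl, ha⟩ ⟨a', rfl, ha'⟩
        refine ⟨a + a', rfl, fun b => ?_⟩
        simp only [Pi.add_apply, mul_add, Finset.sum_add_distrib, ha, ha', add_zero])
      (by
        rintro _ ⟨a, rfl, ha⟩
        refine ⟨-a, rfl, fun b => ?_⟩
        simp only [Pi.neg_apply, mul_neg, Finset.sum_neg_distrib, ha, neg_zero])
      (by
        rintro d _ ⟨a, rfl, ha⟩
        refine ⟨fun i => d * a i, rfl, fun b => ?_⟩
        simpa only [mul_assoc] using ha (b * d))
      (by
        rintro _ d ⟨a, rfl, ha⟩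
        refine ⟨fun i => a i * d, rfl, fun b => ?_⟩
        simp only [← mul_assoc, ← Finset.sum_mul, ha, zero_mul])
    have hmem : ∀ x, x ∈ J ↔ ∃ a : I → A, a i₀ = x ∧
        ∀ b, ∑ i ∈ insert i₀ S, e i * b * a i = 0 := fun x => TwoSidedIdeal.mem_mk' ..
    intro a ha
    rcases hsimple J with hJ | hJ
    · have h0 : a i₀ = 0 := by
        have : a i₀ ∈ J := (hmem _).2 ⟨a, rfl, ha⟩
        rwa [hJ, TwoSidedIdeal.mem_bot] at this
      have hS := ih a fun b => by
        have := ha b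
        rwa [Finset.sum_insert hi₀, h0, mul_zero, zero_add] at this
      intro i hi
      rcases Finset.mem_insert.1 hi with rfl | hi
      exacts [h0, hS i hi]
    · exfalso
      obtain ⟨c, hc1, hc⟩ := (hmem 1).1 (hJ ▸ trivial)
      have hcomm : ∀ d, ∀ i ∈ S, c i * d - d * c i = 0 := fun d => ih _ fun b => by
        have h1 : ∑ i ∈ insert i₀ S, e i * b * (c i * d - d * c i) = 0 := by
          have h2 := hc (b * d)
          have h3 := congrArg (· * d) (hc b)
          simp only [Finset.sum_mul, zero_mul] at h3
          simp only [mul_sub, Finset.sum_sub_distrib, ← mul_assoc] at h2 h3 ⊢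
          rw [h2, h3, sub_zero]
        simpa [Finset.sum_insert hi₀, hc1] using h1
      have hscalar : ∀ i, ∃ r : ℂ, i ∈ insert i₀ S → algebraMap ℂ A r = c i := by
        intro i
        by_cases hi : i ∈ insert i₀ S
        · rcases Finset.mem_insert.1 hi with rfl | hi'
          · exact ⟨1, fun _ => by simp [hc1]⟩
          · have hz : c i ∈ Subalgebra.center ℂ A :=
              Subalgebra.mem_center_iff.2 fun d => (sub_eq_zero.1 (hcomm d i hi')).symm
            rw [hcentral, Algebra.mem_bot] at hz
            obtain ⟨r, hr⟩ := hz
            exact ⟨r, fun _ => hr⟩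
        · exact ⟨0, fun h => absurd h hi⟩
      choose r hr using hscalar
      have hrel : ∑ i ∈ insert i₀ S, r i • e i = 0 := by
        rw [← hc 1]
        refine Finset.sum_congr rfl fun i hi => ?_
        rw [← hr i hi, mul_one, Algebra.smul_def, Algebra.commutes]
      have hi₀mem := Finset.mem_insert_self i₀ S
      have hr0 := linearIndependent_iff'.1 he _ r hrel i₀ hi₀mem
      have h10 : (1 : A) = 0 := by rw [← hc1, ← hr i₀ hi₀mem, hr0, map_zero]
      -- A linearly independent family has no zero member, so `A` is not the zero ring.
      exact he.ne_zero i₀ (by rw [← mul_one (e i₀), h10, mul_zero])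

theorem linearIndependent_mul_mul {A I J X : Type*} [Ring A] [Algebra ℂ A]
    (hsimple : ∀ J : TwoSidedIdeal A, J = ⊥ ∨ J = ⊤)
    (hcentral : Subalgebra.center ℂ A = ⊥)
    {e : I → A} (he : LinearIndependent ℂ e)
    {v : J → X → A} (hv : LinearIndependent ℂ v) :
    LinearIndependent ℂ (fun (p : I × J) (y : A × X) => e p.1 * y.1 * v p.2 y.2) := by
  classical
  rw [linearIndependent_iff'']
  rintro s g hg hsum ⟨i, j⟩
  by_cases hij : (i, j) ∈ s
  swap
  · exact hg _ hij
  -- Enlarge the support to a rectangle, so that the sum can be taken over `i` and `j` separately.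
  have hsub : s ⊆ s.image Prod.fst ×ˢ s.image Prod.snd := Finset.subset_product
  have hrect : ∀ b x, ∑ i ∈ s.image Prod.fst,
      e i * b * (∑ j ∈ s.image Prod.snd, g (i, j) • v j x) = 0 := by
    intro b x
    have h := congrFun hsum (b, x)
    rw [Finset.sum_subset hsub (fun p _ hp => by rw [hg p hp, zero_smul]),
      Finset.sum_product] at h
    simpa [Finset.sum_apply, Finset.mul_sum] using h
  refine linearIndependent_iff'.1 hv (s.image Prod.snd) (fun j => g (i, j)) ?_ j
    (Finset.mem_image_of_mem _ hij)
  funext x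
  have := eq_zero_of_forall_sum_mul_mul_eq_zero hsimple hcentral he _ _ (fun b => hrect b x) i
    (Finset.mem_image_of_mem Prod.fst hij)
  simpa [Finset.sum_apply] using this

/-- The words `e (s 0) * b 0 * e (s 1) * ⋯ * b (k - 1) * e (s k)`, indexed by `s`, are linearly
independent as functions of `b`. -/
theorem linearIndependent_word {A I : Type*} [Ring A] [Algebra ℂ A]
    (hsimple : ∀ J : TwoSidedIdeal A, J = ⊥ ∨ J = ⊤)
    (hcentral : Subalgebra.center ℂ A = ⊥)
    {e : I → A} (he : LinearIndependent ℂ e) (k : ℕ) :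
    LinearIndependent ℂ (fun (s : Fin (k + 1) → I) (b : Fin k → A) =>
      e (s 0) * (List.ofFn fun i : Fin k => b i * e (s i.succ)).prod) := by
  induction k with
  | zero =>
    have h := he.comp (fun s : Fin 1 → I => s 0) (Equiv.funUnique (Fin 1) I).injective
    refine LinearIndependent.of_comp (LinearMap.proj (R := ℂ) (φ := fun _ => A) default) ?_
    convert h using 1
    funext s
    simp
  | succ k ih =>
    have h := linearIndependent_mul_mul hsimple hcentral he ih
    -- Reindex by `s = (s 0, tail s)`, and evaluate at `b = (b 0, tail b)`.
    rw [← linearIndependent_equiv (Fin.consEquiv fun _ : Fin (k + 2) => I)]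
    refine LinearIndependent.of_comp
      (LinearMap.funLeft ℂ A fun y : A × (Fin k → A) => (Fin.cons y.1 y.2 : Fin (k + 1) → A)) ?_
    convert h using 1
    funext p y
    simp [LinearMap.funLeft_apply, Fin.consEquiv, List.ofFn_succ, mul_assoc]


/-- Let `A` be a unital associative `ℂ`-algebra which is simple (nonzero, and its only
two-sided ideals are `0` and `A`) and central over `ℂ` (its center is `ℂ·1`). For `k ≥ 1`,
the `ℂ`-linear map `ι : A^{⊗(k+1)} → MultilinearMaps(A^k, A)` determined on elementary
tensors by `ι(a_0 ⊗ ⋯ ⊗ a_k)(b_1,…,b_k) = a_0 b_1 a_1 b_2 ⋯ b_k a_k` is injective. -/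
theorem iota_injective_of_central_simple (A : Type*) [Ring A] [Algebra ℂ A] [Nontrivial A]
    (hsimple : ∀ I : TwoSidedIdeal A, I = ⊥ ∨ I = ⊤)
    (hcentral : Subalgebra.center ℂ A = ⊥)
    (k : ℕ) (hk : 1 ≤ k)
    (ι : PiTensorProduct ℂ (fun _ : Fin (k + 1) => A) →ₗ[ℂ]
          MultilinearMap ℂ (fun _ : Fin k => A) A)
    (hι : ∀ (a : Fin (k + 1) → A) (b : Fin k → A),
      ι (PiTensorProduct.tprod ℂ a) b
        = a 0 * (List.ofFn fun i : Fin k => b i * a i.succ).prod) :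
    Function.Injective ι := by
  let e := Module.Basis.ofVectorSpace ℂ A
  let B := Basis.piTensorProduct fun _ : Fin (k + 1) => e
  refine LinearMap.injective_of_linearIndependent (v := B) B.span_eq ?_
  -- Independence may be tested after forgetting multilinearity of the values of `ι`.
  let coeFn : MultilinearMap ℂ (fun _ : Fin k => A) A →ₗ[ℂ] ((Fin k → A) → A) :=
    { toFun := fun f => f
      map_add' := fun _ _ => rfl
      map_smul' := fun _ _ => rfl }
  refine LinearIndependent.of_comp coeFn ?_
  have hword : coeFn ∘ ι ∘ B = fun s b =>
      e (s 0) * (List.ofFn fun i : Fin k => b i * e (s i.succ)).prod := by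
    funext s b
    simp [B, coeFn, hι]
  rw [hword]
  exact linearIndependent_word hsimple hcentral e.linearIndependent k
end
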